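/- Let r ∈ {1,3}. For every real number x ≥ 887, the interval (x, 1.048x] contains a prime congruent to r modulo 4. -/

import Mathlib

/-!
Let `w` be the Möbius function on the odd numbers, truncated at `K` and corrected at one far point
`Q` so that `∑ w k / k = 0`. Then `w * log = Λ + Λ * (w * ζ - 1)`. Summed over a residue class
modulo `4`, the left side is linear in `N` up to `O(log N)`, because `∑ w k / k = 0` cancels the
terms `N log N`. For the last term one needs a bound for the sums of `w * ζ - 1` over residue
classes: these are integers below `Q`, majorized there by a small step function, and above `Q` they
are at most `3 / 4 * ∑ |w k| + 1`. Hence a Chebyshev bound `ψ N ≤ C N` over the odd numbers yields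
`|ψ (N; 4, a) - δ N| ≤ (0.0108 C + 0.0001) N` with an explicit `δ` near `1 / 2`. Summing over both
classes improves `C` from `1.65` to `1.04`; a second application gives an error small enough to find
primes in `(x, 1.048 x]` once `x ≥ 2 ^ 48`. Below `2 ^ 48` a chain of explicit primes in each class,
with consecutive ratios at most `1.048`, settles the claim.
-/

open Finset ArithmeticFunction
open scoped ArithmeticFunction.zeta ArithmeticFunction.Moebius

/-! ### Sums over residue classes -/

section ClassSum

variable {q : ℕ}

/-- The sum of `f n` over the residue class `a` modulo `q`, restricted to `0 < n ≤ N`. For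
`f = Λ` this is the Chebyshev function `ψ(N; q, a)`. -/
def classSum {R : Type*} [AddCommMonoid R] (a : ZMod q) (f : ArithmeticFunction R)
    (N : ℕ) : R :=
  ∑ n ∈ Ioc 0 N with ((n : ℕ) : ZMod q) = a, f n

@[simp]
theorem classSum_zero_right {R : Type*} [AddCommMonoid R] (a : ZMod q) (f : ArithmeticFunction R) :
    classSum a f 0 = 0 := by
  simp [classSum]

theorem classSum_eq_sum_Icc (a : ZMod q) (f : ArithmeticFunction ℝ) (N : ℕ) :
    classSum a f N = ∑ n ∈ Icc 0 N, if ((n : ℕ) : ZMod q) = a then f n else 0 := by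
  rw [classSum, sum_filter, Icc_eq_cons_Ioc N.zero_le, sum_cons]
  simp

theorem arithmeticFunction_sub_apply {R : Type*} [AddGroup R] (f g : ArithmeticFunction R) (n : ℕ) :
    (f - g) n = f n - g n := by
  rw [sub_eq_add_neg, ArithmeticFunction.add_apply, ArithmeticFunction.neg_apply, sub_eq_add_neg]

theorem abs_classSum_one_le (a : ZMod q) (N : ℕ) :
    |classSum a (1 : ArithmeticFunction ℝ) N| ≤ 1 := by
  simp only [classSum, one_apply, sum_ite_eq']
  split_ifs <;> simp

theorem classSum_natCast_eq_sum_range {R : Type*} [AddCommMonoid R] {c : ℕ} (hc : 0 < c)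
    (hcq : c ≤ q) (f : ArithmeticFunction R) (m : ℕ) :
    classSum (c : ZMod q) f m = ∑ j ∈ range ((m + q - c) / q), f (q * j + c) := by
  have hq : 0 < q := hc.trans_le hcq
  have hinj : Function.Injective fun j ↦ q * j + c := fun i j h ↦
    Nat.eq_of_mul_eq_mul_left hq (Nat.add_right_cancel h)
  rw [classSum, ← sum_image (f := fun i ↦ f i) fun _ _ _ _ h ↦ hinj h]
  refine sum_congr ?_ fun _ _ ↦ rfl
  ext n
  simp only [mem_filter, mem_Ioc, mem_image, mem_range, ZMod.natCast_eq_natCast_iff]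
  constructor
  · rintro ⟨⟨hn, hnm⟩, hmod⟩
    have hcn : c ≤ n := by
      by_contra! hlt
      have hle := Nat.le_of_dvd (by lia) ((Nat.modEq_iff_dvd' hlt.le).1 hmod)
      lia
    obtain ⟨j, hj⟩ := (Nat.modEq_iff_dvd' hcn).1 hmod.symm
    refine ⟨j, (Nat.le_div_iff_mul_le hq).2 ?_, by lia⟩
    rw [Nat.succ_mul, mul_comm]
    lia
  · rintro ⟨j, hj, rfl⟩
    rw [Nat.lt_iff_add_one_le, Nat.le_div_iff_mul_le hq, Nat.succ_mul, mul_comm] at hj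
    exact ⟨by lia, by simp [Nat.ModEq]⟩

theorem sum_filter_mul_eq_sum_sum {R : Type*} [Semiring R] (f g : ArithmeticFunction R)
    (P : ℕ → Prop) [DecidablePred P] (N : ℕ) :
    ∑ n ∈ Ioc 0 N with P n, (f * g) n =
      ∑ d ∈ Ioc 0 N, f d * ∑ m ∈ Ioc 0 (N / d) with P (d * m), g m := by
  simp only [mul_apply, mul_sum]
  rw [sum_sigma', sum_sigma']
  refine sum_nbij' (fun x ↦ ⟨x.2.1, x.2.2⟩) (fun x ↦ ⟨x.1 * x.2, (x.1, x.2)⟩) ?_ ?_ ?_ ?_ ?_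
  · rintro ⟨n, d, m⟩ h
    simp only [mem_sigma, mem_filter, mem_Ioc, Nat.mem_divisorsAntidiagonal] at h ⊢
    obtain ⟨⟨⟨hn, hnN⟩, hP⟩, rfl, -⟩ := h
    have hd := Nat.pos_of_mul_pos_right hn
    have hm := Nat.pos_of_mul_pos_left hn
    exact ⟨⟨hd, (Nat.le_mul_of_pos_right d hm).trans hnN⟩,
      ⟨hm, (Nat.le_div_iff_mul_le hd).2 (mul_comm d m ▸ hnN)⟩, hP⟩
  · rintro ⟨d, m⟩ h
    simp only [mem_sigma, mem_filter, mem_Ioc, Nat.mem_divisorsAntidiagonal] at h ⊢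
    obtain ⟨⟨hd, -⟩, ⟨hm, hmN⟩, hP⟩ := h
    have hdm := Nat.mul_pos hd hm
    exact ⟨⟨⟨hdm, mul_comm d m ▸ (Nat.le_div_iff_mul_le hd).1 hmN⟩, hP⟩, trivial, hdm.ne'⟩
  · rintro ⟨n, d, m⟩ h
    simp only [mem_sigma, Nat.mem_divisorsAntidiagonal] at h
    obtain ⟨-, rfl, -⟩ := h
    rfl
  · intros
    rfl
  · intros
    rfl

theorem classSum_mul {R : Type*} [Semiring R] (f g : ArithmeticFunction R) {a : ZMod q}
    (ha : IsUnit a) (N : ℕ) :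
    classSum a (f * g) N =
      ∑ d ∈ Ioc 0 N with d.Coprime q, f d * classSum (a * (d : ZMod q)⁻¹) g (N / d) := by
  rw [classSum, sum_filter_mul_eq_sum_sum, sum_filter]
  refine sum_congr rfl fun d _ ↦ ?_
  split_ifs with hd
  · have hinv := ZMod.coe_mul_inv_eq_one d hd
    congr 2
    ext m
    simp only [mem_filter, Nat.cast_mul, and_congr_right_iff]
    refine fun _ ↦ ⟨fun h ↦ ?_, fun h ↦ ?_⟩
    · linear_combination (d : ZMod q)⁻¹ * h - m * hinv
    · linear_combination (d : ZMod q) * h + a * hinv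
  · rw [filter_false_of_mem fun m _ h ↦ ?_, sum_empty, mul_zero]
    rw [Nat.cast_mul] at h
    exact hd ((ZMod.isUnit_iff_coprime d q).1 (isUnit_of_mul_isUnit_left (h ▸ ha)))

theorem isUnit_mul_inv_natCast {a : ZMod q} (ha : IsUnit a) {d : ℕ} (hd : d.Coprime q) :
    IsUnit (a * (d : ZMod q)⁻¹) :=
  ha.mul (IsUnit.of_mul_eq_one _ (by rw [mul_comm]; exact ZMod.coe_mul_inv_eq_one d hd))

theorem classSum_zeta_eq_count [NeZero q] {c : ZMod q} (hc : c ≠ 0) (N : ℕ) :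
    classSum c (ζ : ArithmeticFunction ℝ) N = (N + 1).count (· ≡ c.val [MOD q]) := by
  have hset : {n ∈ Ioc 0 N | ((n : ℕ) : ZMod q) = c} =
      {n ∈ range (N + 1) | n ≡ c.val [MOD q]} := by
    ext n
    have hmod : ((n : ℕ) : ZMod q) = c ↔ n ≡ c.val [MOD q] := by
      rw [← ZMod.natCast_eq_natCast_iff, ZMod.natCast_zmod_val]
    simp only [mem_filter, mem_Ioc, mem_range, hmod, Nat.lt_succ_iff, and_congr_left_iff,
      and_iff_right_iff_imp]
    rintro h -
    refine Nat.pos_of_ne_zero fun h0 ↦ hc ?_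
    rw [← hmod, h0, Nat.cast_zero] at h
    exact h.symm
  rw [classSum, Nat.count_eq_card_filter_range, ← hset, card_eq_sum_ones, Nat.cast_sum]
  refine sum_congr rfl fun n hn ↦ ?_
  rw [mem_filter, mem_Ioc] at hn
  simp [hn.1.1.ne']

theorem abs_classSum_zeta_sub_le [NeZero q] {c : ZMod q} (hc : c ≠ 0) {z : ℝ} (hz : 0 ≤ z) :
    |classSum c (ζ : ArithmeticFunction ℝ) ⌊z⌋₊ - z / q| ≤ 1 - 1 / q := by
  have hq0 : (0 : ℝ) < q := by exact_mod_cast NeZero.pos q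
  have hv : 0 < c.val := Nat.pos_of_ne_zero fun h ↦ hc ((ZMod.val_eq_zero c).1 h)
  have hvq : c.val + 1 ≤ q := c.val_lt
  rw [classSum_zeta_eq_count hc]
  set N := ⌊z⌋₊
  set C := (N + 1).count (· ≡ c.val [MOD q]) with hC
  have hceil : (C : ℤ) = ⌈((N + 1 : ℕ) - (c.val : ℕ)) / (q : ℚ)⌉ := by
    rw [hC, Nat.count_modEq_card_eq_ceil _ (by lia), Nat.mod_eq_of_lt c.val_lt]
  have hq0' : (0 : ℚ) < q := by exact_mod_cast NeZero.pos q
  rw [eq_comm, Int.ceil_eq_iff, lt_div_iff₀ hq0', div_le_iff₀ hq0'] at hceil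
  push_cast at hceil
  have hlow : N + 1 ≤ C * q + c.val := by
    exact_mod_cast (by linarith : (N + 1 : ℚ) ≤ C * q + c.val)
  have hup : C * q + c.val < N + 1 + q := by
    exact_mod_cast (by linarith : (C * q + c.val : ℚ) < N + 1 + q)
  have hlow' : (N + 1 : ℝ) ≤ C * q + (q - 1) := by
    exact_mod_cast (by lia : (N + 1 : ℤ) ≤ C * q + (q - 1))
  have hup' : (C * q : ℝ) ≤ N + (q - 1) := by
    exact_mod_cast (by lia : (C * q : ℤ) ≤ N + (q - 1))
  have hNz : (N : ℝ) ≤ z := Nat.floor_le hz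
  have hzN : z < N + 1 := Nat.lt_floor_add_one z
  rw [abs_le]
  constructor <;> field_simp <;> linarith

open MeasureTheory in
theorem abs_sum_log_mul_sub_le {c : ℕ → ℝ} {κ C y : ℝ} (hc : c 0 = 0)
    (hsum : ∀ t : ℝ, 1 ≤ t → |∑ n ∈ Icc 0 ⌊t⌋₊, c n - κ * t| ≤ C) (hy : 1 ≤ y) :
    |∑ n ∈ Icc 0 ⌊y⌋₊, Real.log n * c n - κ * (y * (Real.log y - 1) + 1)| ≤
      2 * C * Real.log y := by
  have hlog : 0 ≤ Real.log y := Real.log_nonneg hy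
  have hne : ∀ t ∈ Set.Icc (1 : ℝ) y, t ≠ 0 := fun t ht ↦ (zero_lt_one.trans_le ht.1).ne'
  have hinv : IntegrableOn (fun t : ℝ ↦ t⁻¹) (Set.Icc 1 y) :=
    (continuousOn_id.inv₀ hne).integrableOn_Icc
  have habel := sum_mul_eq_sub_integral_mul₀ c (f := Real.log) hc y
    (fun t ht ↦ Real.differentiableAt_log (hne t ht)) (by simpa [Real.deriv_log'] using hinv)
  simp only [Real.deriv_log', ← intervalIntegral.integral_of_le hy] at habel
  have hS : IntervalIntegrable (fun t ↦ t⁻¹ * ∑ n ∈ Icc 0 ⌊t⌋₊, c n) volume 1 y :=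
    (intervalIntegrable_iff_integrableOn_Icc_of_le hy).2
      (integrableOn_mul_sum_Icc c zero_le_one hinv)
  have hmain : |(∫ t in (1 : ℝ)..y, t⁻¹ * ∑ n ∈ Icc 0 ⌊t⌋₊, c n) - κ * (y - 1)| ≤
      C * Real.log y := by
    have hsub : (∫ t in (1 : ℝ)..y, t⁻¹ * ∑ n ∈ Icc 0 ⌊t⌋₊, c n) - κ * (y - 1) =
        ∫ t in (1 : ℝ)..y, (t⁻¹ * ∑ n ∈ Icc 0 ⌊t⌋₊, c n - κ) := by
      rw [intervalIntegral.integral_sub hS intervalIntegrable_const,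
        intervalIntegral.integral_const, smul_eq_mul, mul_comm κ]
    have hCinv : ∫ t in (1 : ℝ)..y, C * t⁻¹ = C * Real.log y := by
      rw [intervalIntegral.integral_const_mul, integral_inv_of_pos one_pos (by linarith), div_one]
    rw [hsub, ← hCinv, ← Real.norm_eq_abs]
    refine intervalIntegral.norm_integral_le_of_norm_le hy (.of_forall fun t ht ↦ ?_) ?_
    · have ht0 : 0 < t := zero_lt_one.trans ht.1
      rw [Real.norm_eq_abs, show t⁻¹ * ∑ n ∈ Icc 0 ⌊t⌋₊, c n - κ =
        (∑ n ∈ Icc 0 ⌊t⌋₊, c n - κ * t) * t⁻¹ by field_simp, abs_mul, abs_of_pos (inv_pos.2 ht0)]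
      exact mul_le_mul_of_nonneg_right (hsum t ht.1.le) (inv_pos.2 ht0).le
    · exact ((intervalIntegrable_iff_integrableOn_Icc_of_le hy).2 hinv).const_mul C
  have hend : |Real.log y * (∑ n ∈ Icc 0 ⌊y⌋₊, c n - κ * y)| ≤ C * Real.log y := by
    rw [abs_mul, abs_of_nonneg hlog, mul_comm]
    exact mul_le_mul_of_nonneg_right (hsum y hy) hlog
  rw [habel]
  rw [abs_le] at hmain hend ⊢
  constructor <;> linarith

theorem abs_classSum_log_sub_le [NeZero q] {c : ZMod q} (hc : c ≠ 0) {y : ℝ} (hy : 1 ≤ y) :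
    |classSum c ArithmeticFunction.log ⌊y⌋₊ - 1 / q * (y * (Real.log y - 1) + 1)| ≤
      2 * (1 - 1 / q) * Real.log y := by
  have key := abs_sum_log_mul_sub_le (κ := 1 / q) (C := 1 - 1 / q)
    (c := fun n ↦ if ((n : ℕ) : ZMod q) = c then (ζ : ArithmeticFunction ℝ) n else 0)
    (by simp) (fun t ht ↦ ?_) hy
  · rw [classSum_eq_sum_Icc]
    convert key using 5 with n
    by_cases hn : n = 0 <;> simp [hn, log_apply]
  · rw [← classSum_eq_sum_Icc, one_div_mul_eq_div]
    exact abs_classSum_zeta_sub_le hc (by linarith)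

end ClassSum

/-! ### Balanced weights -/

/-- `w` is supported on integers up to `Q` prime to `q`, and `∑ w k / k = 0`. Convolving with such
a `w` annihilates the linear main term of counting functions in residue classes modulo `q`. -/
structure IsBalancedWeight (q Q : ℕ) (w : ArithmeticFunction ℝ) : Prop where
  le_of_ne_zero : ∀ ⦃k⦄, w k ≠ 0 → k ≤ Q
  coprime_of_ne_zero : ∀ ⦃k⦄, w k ≠ 0 → k.Coprime q
  sum_div : ∑ k ∈ Ioc 0 Q, w k / k = 0

/-- The main constant `-(1/q) ∑ w k log k / k` that a balanced weight assigns to `ψ(N; q, a)`. -/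
noncomputable def mainConst (q Q : ℕ) (w : ArithmeticFunction ℝ) : ℝ :=
  -(1 / q) * ∑ k ∈ Ioc 0 Q, w k / k * Real.log k

/-- `∑ Λ n` over `0 < n ≤ N` prime to `q`. -/
noncomputable def coprimePsi (q N : ℕ) : ℝ := ∑ n ∈ Ioc 0 N with n.Coprime q, Λ n

namespace IsBalancedWeight

variable {q Q : ℕ} {w : ArithmeticFunction ℝ} (hw : IsBalancedWeight q Q w) {a : ZMod q}
include hw

theorem classSum_mul (g : ArithmeticFunction ℝ) (ha : IsUnit a) (N : ℕ) :
    classSum a (w * g) N = ∑ k ∈ Ioc 0 Q, w k * classSum (a * (k : ZMod q)⁻¹) g (N / k) := by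
  have hzero : ∀ k, w k = 0 ∨ N < k → w k * classSum (a * (k : ZMod q)⁻¹) g (N / k) = 0 := by
    rintro k (hk | hk)
    · rw [hk, zero_mul]
    · rw [Nat.div_eq_of_lt hk, classSum_zero_right, mul_zero]
  have hsub := sum_subset (f := fun k ↦ w k * classSum (a * (k : ZMod q)⁻¹) g (N / k))
    (Ioc_subset_Ioc_right (a := 0) (Nat.le_add_left Q N)) fun k _ hk ↦ hzero k (.inl ?_)
  · rw [hsub, _root_.classSum_mul w g ha]
    refine sum_subset (fun k hk ↦ ?_) fun k hk hk' ↦ hzero k ?_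
    · rw [mem_filter, mem_Ioc] at hk
      exact mem_Ioc.2 ⟨hk.1.1, hk.1.2.trans (Nat.le_add_right N Q)⟩
    · by_contra! h
      exact hk' (mem_filter.2 ⟨mem_Ioc.2 ⟨(mem_Ioc.1 hk).1, h.2⟩, hw.coprime_of_ne_zero h.1⟩)
  · by_contra h
    exact hk (mem_Ioc.2 ⟨(mem_Ioc.1 ‹_›).1, hw.le_of_ne_zero h⟩)

theorem mul_inv_ne_zero [Fact (1 < q)] (ha : IsUnit a) {k : ℕ} (hk : w k ≠ 0) :
    a * (k : ZMod q)⁻¹ ≠ 0 :=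
  (isUnit_mul_inv_natCast ha (hw.coprime_of_ne_zero hk)).ne_zero

theorem abs_classSum_mul_zeta_le [Fact (1 < q)] (ha : IsUnit a) (N : ℕ) :
    |classSum a (w * (ζ : ArithmeticFunction ℝ)) N| ≤ (1 - 1 / q) * ∑ k ∈ Ioc 0 Q, |w k| := by
  have : NeZero q := ⟨(zero_lt_one.trans Fact.out).ne'⟩
  have hmain : ∑ k ∈ Ioc 0 Q, w k * ((N / k : ℝ) / q) = 0 := by
    rw [sum_congr rfl fun k _ ↦ show w k * ((N / k : ℝ) / q) = N / q * (w k / k) by ring,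
      ← mul_sum, hw.sum_div, mul_zero]
  rw [hw.classSum_mul _ ha, ← sub_zero (∑ k ∈ _, _), ← hmain, ← sum_sub_distrib, mul_sum]
  refine (abs_sum_le_sum_abs _ _).trans (sum_le_sum fun k _ ↦ ?_)
  rw [← mul_sub, abs_mul, mul_comm]
  obtain hk | hk := eq_or_ne (w k) 0
  · simp [hk]
  · rw [← Nat.floor_div_eq_div (K := ℝ)]
    gcongr
    exact abs_classSum_zeta_sub_le (hw.mul_inv_ne_zero ha hk) (by positivity)

theorem sum_mul_div_mul_log_sub_one {N : ℕ} (hN : Q ≤ N) :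
    ∑ k ∈ Ioc 0 Q, w k * (1 / q * (N / k * (Real.log (N / k) - 1))) = mainConst q Q w * N := by
  have hterm : ∀ k ∈ Ioc 0 Q, w k * (1 / q * (N / k * (Real.log (N / k) - 1))) =
      1 / q * N * (Real.log N - 1) * (w k / k) - 1 / q * N * (w k / k * Real.log k) := by
    intro k hk
    obtain ⟨hk0, hkQ⟩ := mem_Ioc.1 hk
    rw [Real.log_div (by norm_cast; lia) (by norm_cast; lia)]
    ring
  rw [sum_congr rfl hterm, sum_sub_distrib, ← mul_sum, ← mul_sum, hw.sum_div, mainConst]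
  ring

theorem abs_classSum_mul_log_sub_le [Fact (1 < q)] (ha : IsUnit a) {N : ℕ} (hN : Q ≤ N) :
    |classSum a (w * ArithmeticFunction.log) N - mainConst q Q w * N| ≤
      (∑ k ∈ Ioc 0 Q, |w k|) * (2 * Real.log N + 1) := by
  have : NeZero q := ⟨(zero_lt_one.trans Fact.out).ne'⟩
  have hq0 : (0 : ℝ) < 1 / q := by have := NeZero.pos q; positivity
  have hq1 : (1 : ℝ) / q ≤ 1 := by
    rw [div_le_one₀ (by have := NeZero.pos q; positivity)]
    exact_mod_cast NeZero.one_le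
  rw [hw.classSum_mul _ ha, ← hw.sum_mul_div_mul_log_sub_one hN, ← sum_sub_distrib, sum_mul]
  refine (abs_sum_le_sum_abs _ _).trans (sum_le_sum fun k hk ↦ ?_)
  obtain ⟨hk0, hkQ⟩ := mem_Ioc.1 hk
  rw [← mul_sub, abs_mul]
  obtain hwk | hwk := eq_or_ne (w k) 0
  · simp [hwk]
  refine mul_le_mul_of_nonneg_left ?_ (abs_nonneg _)
  have hk0' : (0 : ℝ) < k := mod_cast hk0
  have hy : (1 : ℝ) ≤ N / k := (one_le_div₀ hk0').2 (mod_cast hkQ.trans hN)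
  have hbound := abs_classSum_log_sub_le (hw.mul_inv_ne_zero ha hwk) hy
  rw [Nat.floor_div_eq_div] at hbound
  have hlog : Real.log (N / k) ≤ Real.log N := Real.log_le_log (by linarith)
    (div_le_self (Nat.cast_nonneg N) (mod_cast hk0))
  have hlog0 : 0 ≤ Real.log (N / k) := Real.log_nonneg hy
  rw [abs_le] at hbound ⊢
  constructor <;> nlinarith

theorem abs_classSum_mul_zeta_sub_one_le [Fact (1 < q)] (ha : IsUnit a) (N : ℕ) :
    |classSum a (w * (ζ : ArithmeticFunction ℝ) - 1) N| ≤
      (1 - 1 / q) * ∑ k ∈ Ioc 0 Q, |w k| + 1 := by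
  have hsub : classSum a (w * (ζ : ArithmeticFunction ℝ) - 1) N =
      classSum a (w * (ζ : ArithmeticFunction ℝ)) N - classSum a 1 N := by
    simp only [classSum, arithmeticFunction_sub_apply, sum_sub_distrib]
  rw [hsub]
  exact (abs_sub _ _).trans
    (add_le_add (hw.abs_classSum_mul_zeta_le ha N) (abs_classSum_one_le a N))

theorem abs_classSum_vonMangoldt_sub_le [Fact (1 < q)] {E : ℕ → ℝ}
    (hE : ∀ (c : ZMod q) (m : ℕ), IsUnit c →
      |classSum c (w * (ζ : ArithmeticFunction ℝ) - 1) m| ≤ E m)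
    (ha : IsUnit a) {N : ℕ} (hN : Q ≤ N) :
    |classSum a Λ N - mainConst q Q w * N| ≤
      ∑ d ∈ Ioc 0 N with d.Coprime q, Λ d * E (N / d) +
        (∑ k ∈ Ioc 0 Q, |w k|) * (2 * Real.log N + 1) := by
  have hconv : w * ArithmeticFunction.log = Λ + Λ * (w * (ζ : ArithmeticFunction ℝ) - 1) := by
    rw [← vonMangoldt_mul_zeta]
    ring
  have hsplit : classSum a (w * ArithmeticFunction.log) N =
      classSum a Λ N + classSum a (Λ * (w * (ζ : ArithmeticFunction ℝ) - 1)) N := by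
    simp only [hconv, classSum, ArithmeticFunction.add_apply, sum_add_distrib]
  have herr : |classSum a (Λ * (w * (ζ : ArithmeticFunction ℝ) - 1)) N| ≤
      ∑ d ∈ Ioc 0 N with d.Coprime q, Λ d * E (N / d) := by
    rw [_root_.classSum_mul _ _ ha]
    refine (abs_sum_le_sum_abs _ _).trans (sum_le_sum fun d hd ↦ ?_)
    rw [abs_mul, abs_of_nonneg vonMangoldt_nonneg]
    exact mul_le_mul_of_nonneg_left
      (hE _ _ (isUnit_mul_inv_natCast ha (mem_filter.1 hd).2)) vonMangoldt_nonneg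
  have hlog := hw.abs_classSum_mul_log_sub_le ha hN
  rw [hsplit] at hlog
  rw [abs_le] at herr hlog ⊢
  constructor <;> linarith

end IsBalancedWeight

/-! ### Step functions -/

/-- The step function with jumps `h` at `y`, for `(y, h) ∈ s`. -/
def staircase (s : List (ℕ × ℕ)) (m : ℕ) : ℕ :=
  (s.map fun p ↦ if p.1 ≤ m then p.2 else 0).sum

theorem staircase_mono (s : List (ℕ × ℕ)) : Monotone (staircase s) := by
  intro m n hmn
  refine List.sum_le_sum fun p _ ↦ ?_
  split_ifs <;> lia

theorem sum_vonMangoldt_mul_staircase (q : ℕ) {s : List (ℕ × ℕ)} (hs : ∀ p ∈ s, 0 < p.1) (N : ℕ) :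
    ∑ d ∈ Ioc 0 N with d.Coprime q, Λ d * staircase s (N / d) =
      (s.map fun p ↦ p.2 * coprimePsi q (N / p.1)).sum := by
  induction s with
  | nil => simp [staircase]
  | cons p s ih =>
    have hp : 0 < p.1 := hs p List.mem_cons_self
    have hstep : ∑ d ∈ Ioc 0 N with d.Coprime q, Λ d * (if p.1 ≤ N / d then p.2 else 0 : ℕ) =
        p.2 * coprimePsi q (N / p.1) := by
      rw [coprimePsi, mul_sum, sum_filter, sum_filter,
        ← sum_subset (Ioc_subset_Ioc_right (Nat.div_le_self N p.1)) fun d hd hd' ↦ ?_]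
      · refine sum_congr rfl fun d hd ↦ ?_
        obtain ⟨hd0, hd⟩ := mem_Ioc.1 hd
        rw [if_pos ((Nat.le_div_iff_mul_le hd0).2 ?_), mul_comm]
        exact mul_comm d p.1 ▸ (Nat.le_div_iff_mul_le hp).1 hd
      · rw [mem_Ioc] at hd hd'
        rw [if_neg (c := p.1 ≤ N / d) fun h ↦ hd' ⟨hd.1, (Nat.le_div_iff_mul_le hp).2 ?_⟩]
        · simp
        · exact mul_comm d p.1 ▸ (Nat.le_div_iff_mul_le hd.1).1 h
    rw [List.map_cons, List.sum_cons, ← ih fun p hp ↦ hs p (List.mem_cons_of_mem _ hp), ← hstep,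
      ← sum_add_distrib]
    refine sum_congr rfl fun d _ ↦ ?_
    rw [staircase, List.map_cons, List.sum_cons, Nat.cast_add, mul_add, ← staircase]

theorem sum_map_mul_coprimePsi_le {q T N : ℕ} {C : ℝ} (hC : 0 ≤ C)
    (hT : ∀ n ≥ T, coprimePsi q n ≤ C * n) {s : List (ℕ × ℕ)}
    (hs : ∀ p ∈ s, 0 < p.1 ∧ T * p.1 ≤ N) :
    (s.map fun p ↦ p.2 * coprimePsi q (N / p.1)).sum ≤
      C * N * (s.map fun p ↦ (p.2 / p.1 : ℝ)).sum := by
  rw [← List.sum_map_mul_left]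
  refine List.sum_le_sum fun p hp ↦ ?_
  obtain ⟨hp0, hpN⟩ := hs p hp
  calc (p.2 : ℝ) * coprimePsi q (N / p.1) ≤ p.2 * (C * (N / p.1 : ℕ)) := by
        gcongr
        exact hT _ ((Nat.le_div_iff_mul_le hp0).2 hpN)
    _ ≤ p.2 * (C * (N / p.1)) := by gcongr; exact Nat.cast_div_le
    _ = C * N * (p.2 / p.1) := by ring

/-! ### The truncated Möbius function -/

section TruncatedMoebius

variable {q K Q : ℕ}

/-- The Möbius function restricted to the integers up to `K` that are prime to `q`. -/
def truncMoebius (q K : ℕ) : ArithmeticFunction ℤ :=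
  ⟨fun k ↦ if k ≤ K ∧ k.Coprime q then μ k else 0, by simp⟩

theorem truncMoebius_apply (q K k : ℕ) :
    truncMoebius q K k = if k ≤ K ∧ k.Coprime q then μ k else 0 := rfl

/-- `∑ μ k / k` over the integers `k ≤ K` prime to `q`. -/
def truncMoebiusMass (q K : ℕ) : ℚ := ∑ k ∈ Ioc 0 K with k.Coprime q, (μ k : ℚ) / k

/-- The truncated Möbius function, corrected at the single point `Q` so as to be balanced. For
large `Q` the correction is invisible in `w * ζ` over a long initial range. -/
noncomputable def balancedMoebius (q K Q : ℕ) : ArithmeticFunction ℝ :=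
  ⟨fun k ↦ truncMoebius q K k - if k = Q then Q * (truncMoebiusMass q K : ℝ) else 0, by
    simpa using fun h ↦ Or.inl h.symm⟩

theorem balancedMoebius_apply (q K Q k : ℕ) :
    balancedMoebius q K Q k =
      truncMoebius q K k - if k = Q then Q * (truncMoebiusMass q K : ℝ) else 0 := rfl

theorem sum_truncMoebius (hKQ : K ≤ Q) {g : ℤ → ℕ → ℝ} (hg : ∀ k, g 0 k = 0) :
    ∑ k ∈ Ioc 0 Q, g (truncMoebius q K k) k = ∑ k ∈ Ioc 0 K with k.Coprime q, g (μ k) k := by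
  have hset : {k ∈ Ioc 0 K | k.Coprime q} = {k ∈ Ioc 0 Q | k ≤ K ∧ k.Coprime q} := by
    ext k
    simp only [mem_filter, mem_Ioc]
    lia
  rw [hset, sum_filter]
  refine sum_congr rfl fun k _ ↦ ?_
  rw [truncMoebius_apply]
  split_ifs <;> simp [hg]

theorem sum_balancedMoebius_mul (hKQ : K < Q) (f : ℕ → ℝ) :
    ∑ k ∈ Ioc 0 Q, balancedMoebius q K Q k * f k =
      ∑ k ∈ Ioc 0 K with k.Coprime q, (μ k : ℝ) * f k - Q * truncMoebiusMass q K * f Q := by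
  simp only [balancedMoebius_apply, sub_mul, sum_sub_distrib, ite_mul, zero_mul, sum_ite_eq',
    mem_Ioc, le_refl, and_true, if_pos hKQ.pos]
  rw [sum_truncMoebius hKQ.le (g := fun m k ↦ m * f k) fun k ↦ by simp]

theorem isBalancedWeight_balancedMoebius (hKQ : K < Q) (hQ : Q.Coprime q) :
    IsBalancedWeight q Q (balancedMoebius q K Q) where
  le_of_ne_zero k hk := by
    contrapose! hk
    rw [balancedMoebius_apply, truncMoebius_apply, if_neg (by lia), if_neg (by lia)]
    simp
  coprime_of_ne_zero k hk := by
    contrapose! hk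
    rw [balancedMoebius_apply, truncMoebius_apply, if_neg fun h ↦ hk h.2,
      if_neg (by rintro rfl; exact hk hQ)]
    simp
  sum_div := by
    simp only [div_eq_mul_inv]
    have hQ0 : (Q : ℝ) ≠ 0 := by exact_mod_cast hKQ.pos.ne'
    rw [sum_balancedMoebius_mul hKQ, truncMoebiusMass, Rat.cast_sum]
    push_cast
    simp only [div_eq_mul_inv]
    field_simp
    ring

theorem sum_abs_balancedMoebius_le (hKQ : K ≤ Q) :
    ∑ k ∈ Ioc 0 Q, |balancedMoebius q K Q k| ≤
      ∑ k ∈ Ioc 0 K with k.Coprime q, |(μ k : ℝ)| + Q * |(truncMoebiusMass q K : ℝ)| := by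
  have hle : ∀ k ∈ Ioc 0 Q, |balancedMoebius q K Q k| ≤
      |(truncMoebius q K k : ℝ)| + if k = Q then Q * |(truncMoebiusMass q K : ℝ)| else 0 := by
    intro k _
    rw [balancedMoebius_apply]
    refine (abs_sub _ _).trans_eq ?_
    split_ifs <;> simp [abs_mul]
  refine (sum_le_sum hle).trans ?_
  rw [sum_add_distrib, sum_truncMoebius hKQ (g := fun m _ ↦ |(m : ℝ)|) (by simp), sum_ite_eq']
  gcongr
  split_ifs
  · rfl
  · positivity

theorem balancedMoebius_mul_zeta_apply {n : ℕ} (hn : n < Q) :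
    (balancedMoebius q K Q * (ζ : ArithmeticFunction ℝ)) n =
      ((truncMoebius q K * (ζ : ArithmeticFunction ℤ) : ArithmeticFunction ℤ) n : ℝ) := by
  rw [coe_mul_zeta_apply, coe_mul_zeta_apply, Int.cast_sum]
  refine sum_congr rfl fun k hk ↦ ?_
  rw [balancedMoebius_apply, if_neg (by have := Nat.divisor_le hk; lia), sub_zero]

theorem truncMoebius_mul_zeta_apply {n : ℕ} (hn : 0 < n) :
    (truncMoebius q K * (ζ : ArithmeticFunction ℤ)) n =
      ∑ k ∈ Ioc 0 K with k.Coprime q, if k ∣ n then μ k else 0 := by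
  simp only [coe_mul_zeta_apply, truncMoebius_apply]
  rw [← sum_filter, ← sum_filter, filter_filter]
  refine sum_congr ?_ fun _ _ ↦ rfl
  ext k
  simp only [mem_filter, Nat.mem_divisors, mem_Ioc]
  have := fun h : k ∣ n ↦ Nat.pos_of_dvd_of_pos h hn
  lia

/-- The error in the identity `μ * ζ = 1` caused by truncating `μ` at `K` and to the integers
prime to `q`. -/
def moebiusDefect (q K : ℕ) : ArithmeticFunction ℤ := truncMoebius q K * ζ - 1

theorem classSum_balancedMoebius_mul_zeta_sub_one (a : ZMod q) {m : ℕ} (hm : m < Q) :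
    classSum a (balancedMoebius q K Q * (ζ : ArithmeticFunction ℝ) - 1) m =
      ((classSum a (moebiusDefect q K) m : ℤ) : ℝ) := by
  rw [classSum, classSum, Int.cast_sum]
  refine sum_congr rfl fun n hn ↦ ?_
  have hnm : n ≤ m := (mem_Ioc.1 (mem_filter.1 hn).1).2
  rw [arithmeticFunction_sub_apply, moebiusDefect, arithmeticFunction_sub_apply,
    balancedMoebius_mul_zeta_apply (by lia), Int.cast_sub]
  simp [one_apply]

end TruncatedMoebius

/-! ### Testing all partial sums at once by integer arithmetic -/

theorem sum_range_mul_pow_div_pow_mod {B : ℕ} {D : ℕ → ℕ} {n : ℕ} (hD : ∀ i < n, D i < B) {t : ℕ}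
    (ht : t < n) : (∑ i ∈ range n, D i * B ^ i) / B ^ t % B = D t := by
  induction t generalizing D n with
  | zero =>
    obtain ⟨n, rfl⟩ := Nat.exists_eq_add_of_lt ht
    rw [sum_range_succ', pow_zero, Nat.div_one, mul_one]
    simp only [pow_succ, ← mul_assoc]
    rw [← sum_mul, Nat.mul_add_mod_of_lt (hD 0 ht)]
  | succ t ih =>
    obtain ⟨n, rfl⟩ := Nat.exists_eq_add_of_lt (Nat.zero_lt_of_lt ht)
    rw [zero_add] at hD ht ⊢
    have hB : 0 < B := (hD 0 (by lia)).pos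
    rw [sum_range_succ', pow_zero, mul_one, pow_succ', ← Nat.div_div_eq_div_mul]
    simp only [pow_succ, ← mul_assoc]
    rw [← sum_mul, add_comm, Nat.add_mul_div_right _ _ hB, Nat.div_eq_of_lt (hD 0 (by lia)),
      zero_add, ih (D := fun i ↦ D (i + 1)) (fun i hi ↦ hD _ (by lia)) (by lia)]

theorem sum_range_mul_pow_lt {B : ℕ} {D : ℕ → ℕ} {n : ℕ} (hD : ∀ i < n, D i < B) :
    ∑ i ∈ range n, D i * B ^ i < B ^ n := by
  induction n with
  | zero => simp
  | succ n ih =>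
    rw [sum_range_succ, pow_succ']
    have hlow := ih fun i hi ↦ hD i (by lia)
    have htop := Nat.mul_le_mul_right (B ^ n) (hD n n.lt_succ_self)
    rw [Nat.succ_mul] at htop
    lia

theorem two_pow_le_of_land_eq {b n : ℕ} {D : ℕ → ℕ} (hD : ∀ i < n, D i < 2 ^ (b + 1))
    (h : (∑ i ∈ range n, D i * (2 ^ (b + 1)) ^ i) &&& (∑ i ∈ range n, 2 ^ b * (2 ^ (b + 1)) ^ i) =
      ∑ i ∈ range n, 2 ^ b * (2 ^ (b + 1)) ^ i) {t : ℕ} (ht : t < n) : 2 ^ b ≤ D t := by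
  have htop : ∀ {F : ℕ → ℕ}, (∀ i < n, F i < 2 ^ (b + 1)) →
      (∑ i ∈ range n, F i * (2 ^ (b + 1)) ^ i).testBit ((b + 1) * t + b) = (F t).testBit b := by
    intro F hF
    rw [← sum_range_mul_pow_div_pow_mod hF ht, ← pow_mul, Nat.testBit_mod_two_pow,
      Nat.testBit_div_two_pow, add_comm b (_ * t)]
    simp
  have hbit := congrArg (Nat.testBit · ((b + 1) * t + b)) h
  simp only [Nat.testBit_and, htop hD, htop fun _ _ ↦ Nat.pow_lt_pow_succ one_lt_two,
    Nat.testBit_two_pow_self, Bool.and_true] at hbit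
  exact Nat.ge_two_pow_of_testBit hbit

theorem sum_prefix_mul_pow_modEq (f : ℕ → ℤ) (B : ℤ) (n : ℕ) :
    ∑ i ∈ range n, (∑ j ∈ range (i + 1), f j) * B ^ i ≡
      (∑ i ∈ range n, f i * B ^ i) * ∑ i ∈ range n, B ^ i [ZMOD B ^ n] := by
  have hswap : ∑ i ∈ range n, (∑ j ∈ range (i + 1), f j) * B ^ i =
      ∑ j ∈ range n, f j * (∑ i ∈ range n, B ^ i - ∑ i ∈ range j, B ^ i) := by
    induction n with
    | zero => simp
    | succ n ih =>
      rw [sum_range_succ, ih, sum_mul, sum_range_succ (fun j ↦ f j * B ^ n),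
        sum_range_succ (fun j ↦ f j * (_ - _)), ← add_assoc, ← sum_add_distrib, sum_range_succ]
      congr 1
      · exact sum_congr rfl fun _ _ ↦ by ring
      · ring
  rw [hswap, sum_mul]
  refine Int.modEq_iff_dvd.2 ?_
  rw [← sum_sub_distrib]
  refine dvd_sum fun j _ ↦ ?_
  have hshift : B ^ j * ∑ i ∈ range n, B ^ i =
      ∑ i ∈ range n, B ^ i - ∑ i ∈ range j, B ^ i + B ^ n * ∑ i ∈ range j, B ^ i := by
    have h₁ := sum_range_add (fun i ↦ B ^ i) j n
    have h₂ := sum_range_add (fun i ↦ B ^ i) n j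
    simp only [pow_add, ← mul_sum] at h₁ h₂
    rw [add_comm j n] at h₁
    linarith
  exact ⟨f j * ∑ i ∈ range j, B ^ i, by linear_combination f j * hshift⟩

/-- The number `∑ 2 ^ ((b + 1) * i)` over `i < n`: the digit `1` repeated `n` times in base
`2 ^ (b + 1)`. -/
def repunit (b n : ℕ) : ℕ := (2 ^ ((b + 1) * n) - 1) / (2 ^ (b + 1) - 1)

theorem repunit_eq_sum (b n : ℕ) : repunit b n = ∑ i ∈ range n, (2 ^ (b + 1)) ^ i := by
  rw [repunit, Nat.geomSum_eq (Nat.le_self_pow (by lia) 2), pow_mul]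

/-- For `P = ∑ f i * 2 ^ ((b + 1) * i)`, a simultaneous test of the nonnegativity of the partial
sums `f 0 + ⋯ + f i` for all `i < n`, valid as long as these lie in `[-2 ^ b, 2 ^ b)`. Multiplying
by the repunit forms the partial sums in the digits, and the offset `2 ^ b` moves the sign of each
of them to the top bit of its digit. -/
def PrefixSumsTest (b n : ℕ) (P : ℤ) : Prop :=
  ((2 ^ b + P) * repunit b n % (2 ^ ((b + 1) * n) : ℕ)).toNat &&& 2 ^ b * repunit b n =
    2 ^ b * repunit b n

instance (b n : ℕ) (P : ℤ) : Decidable (PrefixSumsTest b n P) :=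
  inferInstanceAs (Decidable (_ = _))

theorem PrefixSumsTest.sum_nonneg {b n : ℕ} {P : ℤ} (htest : PrefixSumsTest b n P) {f : ℕ → ℤ}
    (hP : P ≡ ∑ i ∈ range n, f i * (2 ^ (b + 1)) ^ i [ZMOD (2 ^ (b + 1)) ^ n])
    (hf : ∀ i < n, |∑ j ∈ range (i + 1), f j| < 2 ^ b) {i : ℕ} (hi : i < n) :
    0 ≤ ∑ j ∈ range (i + 1), f j := by
  set F : ℕ → ℤ := fun i ↦ ∑ j ∈ range (i + 1), f j
  set D : ℕ → ℕ := fun i ↦ (2 ^ b + F i).toNat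
  have hDF : ∀ i < n, (D i : ℤ) = 2 ^ b + F i := fun i hi ↦
    Int.toNat_of_nonneg (by linarith [(abs_lt.1 (hf i hi)).1])
  have hD : ∀ i < n, D i < 2 ^ (b + 1) := fun i hi ↦ by
    zify
    rw [hDF i hi, pow_succ]
    linarith [(abs_lt.1 (hf i hi)).2]
  have hDsum : ((∑ i ∈ range n, D i * (2 ^ (b + 1)) ^ i : ℕ) : ℤ) =
      2 ^ b * repunit b n + ∑ i ∈ range n, F i * (2 ^ (b + 1)) ^ i := by
    rw [repunit_eq_sum]
    push_cast
    rw [mul_sum, ← sum_add_distrib]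
    exact sum_congr rfl fun i hi ↦ by rw [hDF i (mem_range.1 hi), add_mul]
  have hFP : P * repunit b n ≡ ∑ i ∈ range n, F i * (2 ^ (b + 1)) ^ i
      [ZMOD (2 ^ (b + 1)) ^ n] := by
    refine (hP.mul_right _).trans ?_
    rw [repunit_eq_sum]
    exact_mod_cast (sum_prefix_mul_pow_modEq f (2 ^ (b + 1)) n).symm
  have hpack : (2 ^ b + P) * repunit b n % (2 ^ ((b + 1) * n) : ℕ) =
      (∑ i ∈ range n, D i * (2 ^ (b + 1)) ^ i : ℕ) := by
    rw [← Nat.mod_eq_of_lt (sum_range_mul_pow_lt hD), Int.natCast_mod, hDsum, add_mul, pow_mul]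
    exact_mod_cast hFP.add_left (2 ^ b * repunit b n)
  rw [PrefixSumsTest, hpack, Int.toNat_natCast, repunit_eq_sum, mul_sum] at htest
  have hle := two_pow_le_of_land_eq hD htest hi
  zify at hle
  linarith [hDF i hi]

theorem PrefixSumsTest.abs_sum_le {b n : ℕ} {P P' : ℤ} (hadd : PrefixSumsTest b n (P' + P))
    (hsub : PrefixSumsTest b n (P' - P)) {u v : ℕ → ℤ}
    (hP : P ≡ ∑ i ∈ range n, u i * (2 ^ (b + 1)) ^ i [ZMOD (2 ^ (b + 1)) ^ n])
    (hP' : P' ≡ ∑ i ∈ range n, v i * (2 ^ (b + 1)) ^ i [ZMOD (2 ^ (b + 1)) ^ n])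
    (hsmall : ∀ i < n, |∑ j ∈ range (i + 1), v j| + |∑ j ∈ range (i + 1), u j| < 2 ^ b)
    {i : ℕ} (hi : i < n) : |∑ j ∈ range (i + 1), u j| ≤ ∑ j ∈ range (i + 1), v j := by
  have habove := hadd.sum_nonneg (f := fun j ↦ v j + u j)
    (by simpa only [add_mul, sum_add_distrib] using hP'.add hP)
    (fun i hi ↦ by rw [sum_add_distrib]; exact (abs_add_le _ _).trans_lt (hsmall i hi)) hi
  have hbelow := hsub.sum_nonneg (f := fun j ↦ v j - u j)
    (by simpa only [sub_mul, sum_sub_distrib] using hP'.sub hP)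
    (fun i hi ↦ by rw [sum_sub_distrib]; exact (abs_sub _ _).trans_lt (hsmall i hi)) hi
  rw [sum_add_distrib] at habove
  rw [sum_sub_distrib] at hbelow
  rw [abs_le]
  constructor <;> linarith

theorem geom_modEq_sum_filter {B : ℕ} (hB : 2 ≤ B) {a k : ℕ} (hak : a < k) (n : ℕ) :
    B ^ a * ((B ^ (k * (n / k + 1)) - 1) / (B ^ k - 1)) ≡
      ∑ i ∈ range n with i ≡ a [MOD k], B ^ i [MOD B ^ n] := by
  have hk : 0 < k := hak.pos
  have hinj : Function.Injective fun j ↦ a + k * j := fun i j h ↦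
    Nat.eq_of_mul_eq_mul_left hk (Nat.add_left_cancel h)
  rw [pow_mul, ← Nat.geomSum_eq (hB.trans (Nat.le_self_pow hk.ne' B)), mul_sum]
  simp only [← pow_mul, ← pow_add]
  rw [← sum_image (f := fun i ↦ B ^ i) fun _ _ _ _ h ↦ hinj h,
    ← sum_filter_add_sum_filter_not _ (· < n)]
  have hset : {i ∈ (range (n / k + 1)).image (fun j ↦ a + k * j) | i < n} =
      {i ∈ range n | i ≡ a [MOD k]} := by
    ext i
    simp only [mem_filter, mem_image, mem_range, Nat.lt_succ_iff]
    constructor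
    · rintro ⟨⟨j, -, rfl⟩, hj⟩
      exact ⟨hj, by simp [Nat.ModEq]⟩
    · rintro ⟨hi, hmod⟩
      refine ⟨⟨i / k, Nat.div_le_div_right hi.le, ?_⟩, hi⟩
      rw [← Nat.mod_eq_of_lt hak, ← hmod, Nat.mod_add_div]
  rw [hset]
  refine (Nat.modEq_zero_iff_dvd.2 (dvd_sum fun i hi ↦ ?_)).add_left _
  exact pow_dvd_pow B (not_lt.1 (mem_filter.1 hi).2)

/-- The smallest `i` with `k ∣ 4 * i + c`, for odd `k` and `c ∈ {1, 3}`. -/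
def mod4Residue (c k : ℕ) : ℕ := (k * (c * k % 4) - c) / 4

theorem four_mul_mod4Residue_add {c k : ℕ} (hc : c = 1 ∨ c = 3) (hk : k.Coprime 4) :
    4 * mod4Residue c k + c = k * (c * k % 4) := by
  have hodd : k % 2 = 1 :=
    Nat.odd_iff.1 (Nat.coprime_two_right.1 (hk.coprime_dvd_right (by norm_num)))
  have hk4 : k % 4 = 1 ∨ k % 4 = 3 := by lia
  rw [mod4Residue]
  rcases hc with rfl | rfl <;> rcases hk4 with h | h <;> rw [Nat.mul_mod, h] <;> norm_num <;> lia

theorem mod4Residue_lt {c k : ℕ} (hk : 0 < k) : mod4Residue c k < k := by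
  have hmod : c * k % 4 < 4 := Nat.mod_lt _ (by norm_num)
  have := Nat.mul_le_mul_left k (Nat.le_of_lt_succ hmod)
  rw [mod4Residue]
  lia

theorem dvd_four_mul_add_iff {c k : ℕ} (hc : c = 1 ∨ c = 3) (hk : k.Coprime 4) (i : ℕ) :
    k ∣ 4 * i + c ↔ i ≡ mod4Residue c k [MOD k] := by
  have hres : k ∣ 4 * mod4Residue c k + c := ⟨_, four_mul_mod4Residue_add hc hk⟩
  rw [← Nat.modEq_zero_iff_dvd] at hres ⊢
  refine ⟨fun h ↦ ?_, fun h ↦ ((h.mul_left 4).add_right c).trans hres⟩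
  exact Nat.ModEq.cancel_left_of_coprime hk (Nat.ModEq.add_right_cancel' c (h.trans hres.symm))

/-- `∑ B ^ i` over `i ≡ a [MOD k]`, up to multiples of `B ^ n`. -/
def progressionPack (B n a k : ℕ) : ℕ := B ^ a * ((B ^ (k * (n / k + 1)) - 1) / (B ^ k - 1))

/-- The values of `moebiusDefect 4 K` at the numbers `4 * i + c` for `i < n`, packed as digits in
base `B`, up to multiples of `B ^ n`. -/
def moebiusPack (K c B n : ℕ) : ℤ :=
  ∑ k ∈ Ioc 0 K with k.Coprime 4, μ k * progressionPack B n (mod4Residue c k) k -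
    if c = 1 then 1 else 0

/-- The jumps of `staircase s` along the progression `4 * i + c`, packed as digits in base `B`. -/
def staircasePack (s : List (ℕ × ℕ)) (c B : ℕ) : ℤ :=
  (s.map fun p ↦ (p.2 * B ^ ((p.1 + 3 - c) / 4) : ℤ)).sum

theorem moebiusPack_modEq {c : ℕ} (hc : c = 1 ∨ c = 3) (K : ℕ) {B n : ℕ} (hB : 2 ≤ B)
    (hn : 0 < n) : moebiusPack K c B n ≡
      ∑ i ∈ range n, moebiusDefect 4 K (4 * i + c) * (B : ℤ) ^ i [ZMOD (B : ℤ) ^ n] := by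
  have hone : ∑ i ∈ range n, (1 : ArithmeticFunction ℤ) (4 * i + c) * (B : ℤ) ^ i =
      if c = 1 then 1 else 0 := by
    rw [sum_eq_single_of_mem 0 (mem_range.2 hn)
      fun i _ hi ↦ by rw [one_apply_ne (by lia), zero_mul]]
    simp [one_apply]
  have hmoebius : ∑ i ∈ range n, (truncMoebius 4 K * (ζ : ArithmeticFunction ℤ)) (4 * i + c) *
      (B : ℤ) ^ i = ∑ k ∈ Ioc 0 K with k.Coprime 4, μ k *
        (∑ i ∈ range n with i ≡ mod4Residue c k [MOD k], B ^ i : ℕ) := by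
    rw [sum_congr rfl fun i _ ↦ by rw [truncMoebius_mul_zeta_apply (by lia), sum_mul], sum_comm]
    refine sum_congr rfl fun k hk ↦ ?_
    rw [sum_filter, Nat.cast_sum, mul_sum]
    refine sum_congr rfl fun i _ ↦ ?_
    simp only [dvd_four_mul_add_iff hc (mem_filter.1 hk).2]
    split_ifs <;> simp
  simp only [moebiusPack, moebiusDefect, arithmeticFunction_sub_apply, sub_mul, sum_sub_distrib]
  rw [hone, hmoebius]
  refine Int.ModEq.sub_right _ (Int.ModEq.sum fun k hk ↦ Int.ModEq.mul_left _ ?_)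
  have hk0 : 0 < k := (mem_Ioc.1 (mem_filter.1 hk).1).1
  exact_mod_cast Int.natCast_modEq_iff.2 (geom_modEq_sum_filter hB (mod4Residue_lt hk0) n)

theorem staircasePack_modEq (s : List (ℕ × ℕ)) (c B n : ℕ) :
    staircasePack s c B ≡ ∑ i ∈ range n,
      (s.map fun p ↦ if i = (p.1 + 3 - c) / 4 then (p.2 : ℤ) else 0).sum * (B : ℤ) ^ i
        [ZMOD (B : ℤ) ^ n] := by
  induction s with
  | nil => simp [staircasePack]
  | cons p s ih =>
    simp only [staircasePack, List.map_cons, List.sum_cons, add_mul, sum_add_distrib, ite_mul,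
      zero_mul, sum_ite_eq', mem_range] at ih ⊢
    refine Int.ModEq.add ?_ ih
    split_ifs with h
    · rfl
    · exact Int.modEq_zero_iff_dvd.2 ((pow_dvd_pow _ (not_lt.1 h)).mul_left _)

theorem staircase_eq_sum_range (s : List (ℕ × ℕ)) {c : ℕ} (hc : c = 1 ∨ c = 3) (i : ℕ) :
    (staircase s (4 * i + c) : ℤ) = ∑ j ∈ range (i + 1),
      (s.map fun p ↦ if j = (p.1 + 3 - c) / 4 then (p.2 : ℤ) else 0).sum := by
  induction s with
  | nil => simp [staircase]
  | cons p s ih =>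
    simp only [staircase, List.map_cons, List.sum_cons, sum_add_distrib, sum_ite_eq', mem_range,
      Nat.cast_add] at ih ⊢
    rw [ih]
    have hjump : p.1 ≤ 4 * i + c ↔ (p.1 + 3 - c) / 4 < i + 1 := by
      rcases hc with rfl | rfl <;> lia
    simp [hjump]

theorem PrefixSumsTest.abs_classSum_le_staircase {K b n c : ℕ} {s : List (ℕ × ℕ)}
    (hc : c = 1 ∨ c = 3)
    (hadd : PrefixSumsTest b n
      (staircasePack s c (2 ^ (b + 1)) + moebiusPack K c (2 ^ (b + 1)) n))
    (hsub : PrefixSumsTest b n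
      (staircasePack s c (2 ^ (b + 1)) - moebiusPack K c (2 ^ (b + 1)) n))
    (hbound : ∀ m < 4 * n,
      (staircase s m : ℤ) + |classSum (c : ZMod 4) (moebiusDefect 4 K) m| < 2 ^ b)
    {m : ℕ} (hm : m < 4 * n) :
    |classSum (c : ZMod 4) (moebiusDefect 4 K) m| ≤ (staircase s m : ℤ) := by
  have hsum (m : ℕ) := classSum_natCast_eq_sum_range (q := 4) (c := c) (by lia) (by lia)
    (moebiusDefect 4 K) m
  obtain hI | ⟨i, hI⟩ : (m + 4 - c) / 4 = 0 ∨ ∃ i, (m + 4 - c) / 4 = i + 1 := by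
    cases (m + 4 - c) / 4 <;> simp
  · rw [hsum, hI]
    simp
  have hmono : (staircase s (4 * i + c) : ℤ) ≤ staircase s m :=
    Nat.cast_le.2 (staircase_mono s (by lia))
  rw [hsum, hI]
  refine le_trans ?_ hmono
  rw [staircase_eq_sum_range s hc]
  refine hadd.abs_sum_le hsub ?_ ?_ (fun j hj ↦ ?_) (by lia)
  · exact_mod_cast moebiusPack_modEq hc K (Nat.le_self_pow b.succ_ne_zero 2) (by lia)
  · exact_mod_cast staircasePack_modEq s c (2 ^ (b + 1)) n
  · have hlt := hbound (4 * j + c) (by lia)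
    rwa [hsum, show (4 * j + c + 4 - c) / 4 = j + 1 by lia,
      ← Nat.abs_cast (staircase _ _), staircase_eq_sum_range s hc] at hlt

/-! ### An explicit weight modulo `4` -/

/-- The balanced weight used for the modulus `4`. The truncation point `2491` is chosen because
`∑ μ k / k` is exceptionally small there, so that the correcting mass at `2 ^ 18 + 1` is small. -/
noncomputable def mod4Weight : ArithmeticFunction ℝ := balancedMoebius 4 2491 (2 ^ 18 + 1)

theorem isBalancedWeight_mod4Weight : IsBalancedWeight 4 (2 ^ 18 + 1) mod4Weight :=
  isBalancedWeight_balancedMoebius (by norm_num) (by norm_num)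

/-- The density of the primes in either residue class prime to `4`, as produced by `mod4Weight`. -/
noncomputable def mod4Density : ℝ := mainConst 4 (2 ^ 18 + 1) mod4Weight

/-- The steps of a majorant, found numerically, of the class sums of `mod4Weight * ζ - 1` modulo
`4`. The last step covers all arguments `≥ 2 ^ 18` through the crude bound `3 / 4 * ∑ |w k| + 1`. -/
def mod4Steps : List (ℕ × ℕ) :=
  [(2495, 8), (3151, 6), (4769, 6), (5617, 6), (11545, 4), (2 ^ 18, 773)]

theorem prefixSumsTest_mod4Steps : ∀ c ∈ [1, 3],
    PrefixSumsTest 10 (2 ^ 16)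
      (staircasePack mod4Steps c (2 ^ 11) + moebiusPack 2491 c (2 ^ 11) (2 ^ 16)) ∧
    PrefixSumsTest 10 (2 ^ 16)
      (staircasePack mod4Steps c (2 ^ 11) - moebiusPack 2491 c (2 ^ 11) (2 ^ 16)) := by
  decide +kernel

theorem abs_log_sub_natLog_pow_le {n k : ℕ} (hn : 0 < n) (hk : 0 < k) :
    |Real.log k - Nat.log 2 (k ^ n) * (Real.log 2 / n)| ≤ Real.log 2 / n := by
  have hn' : (0 : ℝ) < n := Nat.cast_pos.2 hn
  have hlow : (Nat.log 2 (k ^ n) : ℝ) * Real.log 2 ≤ n * Real.log k := by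
    rw [← Real.log_pow, ← Real.log_pow]
    exact Real.log_le_log (by positivity) (by exact_mod_cast Nat.pow_log_le_self 2 (by positivity))
  have hupp : n * Real.log k ≤ (Nat.log 2 (k ^ n) + 1 : ℝ) * Real.log 2 := by
    rw [← Nat.cast_succ, ← Real.log_pow, ← Real.log_pow]
    exact Real.log_le_log (by positivity)
      (by exact_mod_cast (Nat.lt_pow_succ_log_self one_lt_two _).le)
  rw [abs_le]
  constructor <;> field_simp <;> linarith

theorem abs_sum_mul_log_sub_le (s : Finset ℕ) (hs : ∀ k ∈ s, 0 < k) (f : ℕ → ℝ) {n : ℕ}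
    (hn : 0 < n) :
    |∑ k ∈ s, f k * Real.log k - Real.log 2 / n * ∑ k ∈ s, f k * Nat.log 2 (k ^ n)| ≤
      Real.log 2 / n * ∑ k ∈ s, |f k| := by
  rw [mul_sum, mul_sum, ← sum_sub_distrib]
  refine (abs_sum_le_sum_abs _ _).trans (sum_le_sum fun k hk ↦ ?_)
  rw [show f k * Real.log k - Real.log 2 / n * (f k * Nat.log 2 (k ^ n)) =
    (Real.log k - Nat.log 2 (k ^ n) * (Real.log 2 / n)) * f k by ring, abs_mul]
  gcongr
  exact abs_log_sub_natLog_pow_le hn (hs k hk)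

theorem moebius_sums_le_2491 : |truncMoebiusMass 4 2491| ≤ 1 / 17000 ∧
    ∑ k ∈ Ioc 0 2491 with k.Coprime 4, |μ k| = 1013 ∧
    ∑ k ∈ Ioc 0 2491 with k.Coprime 4, (|μ k| : ℚ) / k ≤ 4 ∧
    |∑ k ∈ Ioc 0 2491 with k.Coprime 4, (μ k : ℚ) / k * Nat.log 2 (k ^ 512) + 1475| ≤ 1 := by
  decide +kernel

theorem abs_truncMoebiusMass_le : |(truncMoebiusMass 4 2491 : ℝ)| ≤ 1 / 17000 := by
  have hcast : ((|truncMoebiusMass 4 2491| : ℚ) : ℝ) ≤ ((1 / 17000 : ℚ) : ℝ) :=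
    Rat.cast_le.2 moebius_sums_le_2491.1
  simpa using hcast

theorem sum_abs_mod4Weight_le : ∑ k ∈ Ioc 0 (2 ^ 18 + 1), |mod4Weight k| ≤ 1029 := by
  obtain ⟨-, hsum, -⟩ := moebius_sums_le_2491
  have hsum' : ∑ k ∈ Ioc 0 2491 with k.Coprime 4, |(μ k : ℝ)| = 1013 := by exact_mod_cast hsum
  have := sum_abs_balancedMoebius_le (q := 4) (K := 2491) (Q := 2 ^ 18 + 1) (by norm_num)
  rw [hsum'] at this
  refine this.trans ?_
  push_cast
  linarith [abs_truncMoebiusMass_le]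

theorem abs_sum_moebius_div_mul_log_add_le :
    |∑ k ∈ Ioc 0 2491 with k.Coprime 4, (μ k / k : ℝ) * Real.log k + 1.997| ≤ 0.007 := by
  obtain ⟨-, -, habs, hlog⟩ := moebius_sums_le_2491
  have habs' : ∑ k ∈ Ioc 0 2491 with k.Coprime 4, |(μ k / k : ℝ)| ≤ 4 := by
    simp only [abs_div, Nat.abs_cast]
    exact_mod_cast habs
  have hlog' : |∑ k ∈ Ioc 0 2491 with k.Coprime 4, (μ k / k : ℝ) * Nat.log 2 (k ^ 512) + 1475| ≤
      1 := by exact_mod_cast hlog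
  have happrox := abs_sum_mul_log_sub_le {k ∈ Ioc 0 2491 | k.Coprime 4}
    (fun k hk ↦ (mem_Ioc.1 (mem_filter.1 hk).1).1) (fun k ↦ (μ k / k : ℝ)) (n := 512) (by norm_num)
  rw [abs_le] at hlog' happrox ⊢
  have := Real.log_two_lt_d9
  have := Real.log_two_gt_d9
  constructor <;> push_cast at happrox <;> nlinarith

theorem mod4Density_bounds : 0.497 ≤ mod4Density ∧ mod4Density ≤ 0.502 := by
  have hcorr : |truncMoebiusMass 4 2491 * Real.log (2 ^ 18 + 1)| ≤ 1 / 1000 := by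
    have hQ : Real.log (2 ^ 18 + 1) ≤ 19 * Real.log 2 := by
      rw [← Real.log_rpow two_pos]
      exact Real.log_le_log (by positivity) (by norm_num)
    rw [abs_mul, abs_of_nonneg (Real.log_nonneg (by norm_num : (1 : ℝ) ≤ 2 ^ 18 + 1))]
    calc _ ≤ (1 / 17000 : ℝ) * (19 * Real.log 2) := by gcongr; exact abs_truncMoebiusMass_le
      _ ≤ 1 / 1000 := by linarith [Real.log_two_lt_d9]
  have hmain : mod4Density = -(1 / 4) *
      (∑ k ∈ Ioc 0 2491 with k.Coprime 4, (μ k / k : ℝ) * Real.log k -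
        truncMoebiusMass 4 2491 * Real.log (2 ^ 18 + 1)) := by
    have hweight := sum_balancedMoebius_mul (q := 4) (K := 2491) (Q := 2 ^ 18 + 1) (by norm_num)
      fun k ↦ Real.log k / k
    simp only [mul_div_assoc', ← div_mul_eq_mul_div] at hweight
    rw [mod4Density, mainConst, mod4Weight, hweight]
    norm_num
  have hsum := abs_le.1 abs_sum_moebius_div_mul_log_add_le
  rw [abs_le] at hcorr
  constructor <;> linarith

theorem abs_classSum_mod4Weight_le (c : ZMod 4) (m : ℕ) (hc : IsUnit c) :
    |classSum c (mod4Weight * (ζ : ArithmeticFunction ℝ) - 1) m| ≤ (staircase mod4Steps m : ℝ) := by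
  have : Fact (1 < 4) := ⟨by norm_num⟩
  have hcrude (m : ℕ) :
      |classSum c (mod4Weight * (ζ : ArithmeticFunction ℝ) - 1) m| ≤ (773 : ℝ) := by
    calc _ ≤ _ := isBalancedWeight_mod4Weight.abs_classSum_mul_zeta_sub_one_le hc m
      _ ≤ (1 - 1 / (4 : ℕ)) * 1029 + 1 := by
        gcongr
        exact sum_abs_mod4Weight_le
      _ ≤ 773 := by norm_num
  rcases le_or_gt (2 ^ 18) m with hm | hm
  · have hstair : 773 ≤ staircase mod4Steps m :=
      (show 773 ≤ staircase mod4Steps (2 ^ 18) by decide).trans (staircase_mono _ hm)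
    exact (hcrude m).trans (by exact_mod_cast hstair)
  have hdefect {m : ℕ} (hm : m < 2 ^ 18) :
      |classSum c (mod4Weight * (ζ : ArithmeticFunction ℝ) - 1) m| =
        ((|classSum c (moebiusDefect 4 2491) m| : ℤ) : ℝ) := by
    rw [mod4Weight, classSum_balancedMoebius_mul_zeta_sub_one c (show m < 2 ^ 18 + 1 by lia),
      Int.cast_abs]
  obtain ⟨r, hr, rfl⟩ : ∃ r : ℕ, (r = 1 ∨ r = 3) ∧ (r : ZMod 4) = c := by
    have hunits : ∀ c : ZMod 4, IsUnit c → c = 1 ∨ c = 3 := by decide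
    rcases hunits c hc with rfl | rfl
    exacts [⟨1, .inl rfl, rfl⟩, ⟨3, .inr rfl, rfl⟩]
  obtain ⟨hadd, hsub⟩ := prefixSumsTest_mod4Steps r (by simpa using hr)
  rw [hdefect hm]
  refine mod_cast hadd.abs_classSum_le_staircase hr hsub (fun m hm ↦ ?_) hm
  have hstair : staircase mod4Steps m ≤ 30 :=
    (staircase_mono _ (show m ≤ 2 ^ 18 - 1 by lia)).trans (by decide)
  have hle := hcrude m
  rw [hdefect (by lia)] at hle
  have hle' : |classSum (r : ZMod 4) (moebiusDefect 4 2491) m| ≤ 773 := by exact_mod_cast hle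
  lia

/-! ### Chebyshev bounds in residue classes modulo `4` -/

theorem coprimePsi_le_psi (q N : ℕ) : coprimePsi q N ≤ Chebyshev.psi N := by
  rw [coprimePsi, Chebyshev.psi, Nat.floor_natCast]
  exact sum_le_sum_of_subset_of_nonneg (filter_subset _ _) fun _ _ _ ↦ vonMangoldt_nonneg

theorem coprimePsi_four (N : ℕ) :
    coprimePsi 4 N = classSum (1 : ZMod 4) Λ N + classSum (3 : ZMod 4) Λ N := by
  have hdisj : Disjoint {n ∈ Ioc 0 N | ((n : ℕ) : ZMod 4) = 1}
      {n ∈ Ioc 0 N | ((n : ℕ) : ZMod 4) = 3} :=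
    disjoint_filter.2 fun n _ h₁ h₃ ↦ absurd (h₁.symm.trans h₃) (by decide)
  have hunits : ∀ c : ZMod 4, IsUnit c ↔ c = 1 ∨ c = 3 := by decide
  rw [classSum, classSum, ← sum_union hdisj, ← filter_or, coprimePsi]
  simp only [← hunits, ZMod.isUnit_iff_coprime]

theorem log_le_log_div_self_mul {s t : ℝ} (hs : Real.exp 1 ≤ s) (hst : s ≤ t) :
    Real.log t ≤ Real.log s / s * t := by
  have ht : 0 < t := (Real.exp_pos 1).trans_le (hs.trans hst)
  exact (div_le_iff₀ ht).1 (Real.log_div_self_antitoneOn hs (hs.trans hst) hst)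

theorem sqrt_mul_log_le {s t : ℝ} (hs : Real.exp 2 ≤ s) (hst : s ≤ t) :
    √t * Real.log t ≤ Real.log s / √s * t := by
  have ht : 0 < t := (Real.exp_pos 2).trans_le (hs.trans hst)
  have hanti := (div_le_iff₀ (Real.sqrt_pos.2 ht)).1
    (Real.log_div_sqrt_antitoneOn hs (hs.trans hst) hst)
  calc √t * Real.log t ≤ √t * (Real.log s / √s * √t) := by gcongr
    _ = Real.log s / √s * t := by rw [mul_left_comm, Real.mul_self_sqrt ht.le]

theorem exp_two_le : Real.exp 2 ≤ 8 := by
  calc Real.exp 2 = Real.exp 1 ^ 2 := by rw [← Real.exp_nat_mul]; norm_num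
    _ ≤ 2.7182818286 ^ 2 := by gcongr; exact Real.exp_one_lt_d9.le
    _ ≤ 8 := by norm_num

theorem coprimePsi_le_of_ge {q n : ℕ} (hn : 2 ^ 12 ≤ n) : coprimePsi q n ≤ 1.65 * n := by
  have hn' : (2 ^ 12 : ℝ) ≤ n := by exact_mod_cast hn
  have hlog := sqrt_mul_log_le (exp_two_le.trans (by norm_num)) hn'
  have hpsi := (coprimePsi_le_psi q n).trans (Chebyshev.psi_le (by linarith))
  have hsqrt : √(2 ^ 12 : ℝ) = 64 := by rw [Real.sqrt_eq_iff_mul_self_eq] <;> norm_num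
  rw [hsqrt, Real.log_pow] at hlog
  rw [show (4 : ℝ) = 2 ^ 2 by norm_num, Real.log_pow, mul_assoc 2] at hpsi
  have hmul : Real.log 2 * n ≤ 0.6931471808 * n := by gcongr; exact Real.log_two_lt_d9.le
  push_cast at hlog hpsi
  linarith

theorem abs_classSum_vonMangoldt_mod4_sub_le {a : ZMod 4} (ha : IsUnit a) {C : ℝ} (hC : 0 ≤ C)
    {T N : ℕ} (hT : ∀ n ≥ T, coprimePsi 4 n ≤ C * n) (hTN : T * 2 ^ 18 ≤ N) (hN : 2 ^ 30 ≤ N) :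
    |classSum a Λ N - mod4Density * N| ≤ (0.0108 * C + 0.0001) * N := by
  have : Fact (1 < 4) := ⟨by norm_num⟩
  have hN' : (2 ^ 30 : ℝ) ≤ N := by exact_mod_cast hN
  have hsteps : ∀ p ∈ mod4Steps, 0 < p.1 ∧ p.1 ≤ 2 ^ 18 := by decide
  have hsum : (mod4Steps.map fun p ↦ (p.2 / p.1 : ℝ)).sum ≤ 0.0108 := by norm_num [mod4Steps]
  have hlog : 1029 * (2 * Real.log N + 1) ≤ 0.0001 * N := by
    have hle := log_le_log_div_self_mul (by linarith [Real.exp_one_lt_d9]) hN'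
    rw [Real.log_pow] at hle
    have hmul : Real.log 2 * N ≤ 0.6931471808 * N := by gcongr; exact Real.log_two_lt_d9.le
    linarith
  have hbound := isBalancedWeight_mod4Weight.abs_classSum_vonMangoldt_sub_le
    abs_classSum_mod4Weight_le ha (N := N) (by lia)
  rw [sum_vonMangoldt_mul_staircase 4 fun p hp ↦ (hsteps p hp).1] at hbound
  have hmain := sum_map_mul_coprimePsi_le hC hT fun p hp ↦
    ⟨(hsteps p hp).1, (Nat.mul_le_mul_left T (hsteps p hp).2).trans hTN⟩
  calc _ ≤ _ := hbound
    _ ≤ C * N * 0.0108 + 1029 * (2 * Real.log N + 1) := by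
      gcongr
      · exact hmain.trans (by gcongr)
      · exact sum_abs_mod4Weight_le
    _ ≤ (0.0108 * C + 0.0001) * N := by linarith

theorem coprimePsi_four_le_of_ge {n : ℕ} (hn : 2 ^ 30 ≤ n) : coprimePsi 4 n ≤ 1.04 * n := by
  have hclass {a : ZMod 4} (ha : IsUnit a) := abs_le.1 <| abs_classSum_vonMangoldt_mod4_sub_le ha
    (by norm_num) (fun n hn ↦ coprimePsi_le_of_ge hn) (show 2 ^ 12 * 2 ^ 18 ≤ n by lia) hn
  have hmul : mod4Density * n ≤ 0.502 * n := by gcongr; exact mod4Density_bounds.2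
  rw [coprimePsi_four]
  linarith [(hclass (a := 1) (by decide)).2, (hclass (a := 3) (by decide)).2]

theorem abs_classSum_vonMangoldt_mod4_sub_le_of_ge {a : ZMod 4} (ha : IsUnit a) {N : ℕ}
    (hN : 2 ^ 48 ≤ N) :
    |classSum a Λ N - mod4Density * N| ≤ 0.01134 * N := by
  refine (abs_classSum_vonMangoldt_mod4_sub_le ha (C := 1.04) (T := 2 ^ 30) (by norm_num)
    (fun n hn ↦ coprimePsi_four_le_of_ge hn) (by lia) (by lia)).trans ?_
  gcongr
  norm_num

theorem exists_prime_of_psi_sub_theta_lt {q M N : ℕ} {a : ZMod q}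
    (h : Chebyshev.psi N - Chebyshev.theta N < classSum a Λ N - classSum a Λ M) :
    ∃ p : ℕ, p.Prime ∧ M < p ∧ p ≤ N ∧ (p : ZMod q) = a := by
  contrapose! h
  have hsub : {n ∈ Ioc 0 N | ((n : ℕ) : ZMod q) = a} ⊆
      {n ∈ Ioc 0 M | ((n : ℕ) : ZMod q) = a} ∪ {n ∈ Ioc 0 N | ¬n.Prime} := by
    intro n hn
    simp only [mem_union, mem_filter, mem_Ioc] at hn ⊢
    have := h n
    grind
  have hle := sum_le_sum_of_subset_of_nonneg (f := fun n ↦ Λ n) hsub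
    fun n _ _ ↦ vonMangoldt_nonneg
  have hunion := sum_union_inter (f := fun n ↦ Λ n) (s₁ := {n ∈ Ioc 0 M | ((n : ℕ) : ZMod q) = a})
    (s₂ := {n ∈ Ioc 0 N | ¬n.Prime})
  have hinter := sum_nonneg (f := fun n ↦ Λ n)
    (s := {n ∈ Ioc 0 M | ((n : ℕ) : ZMod q) = a} ∩ {n ∈ Ioc 0 N | ¬n.Prime})
    fun n _ ↦ vonMangoldt_nonneg
  rw [Chebyshev.psi_sub_theta_eq_sum_not_prime, Nat.floor_natCast, classSum, classSum]
  linarith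

theorem psi_sub_theta_le_of_ge {N : ℝ} (hN : 2 ^ 48 ≤ N) :
    Chebyshev.psi N - Chebyshev.theta N ≤ 0.00001 * N := by
  have hlog := sqrt_mul_log_le (exp_two_le.trans (by norm_num)) hN
  have hsqrt : √(2 ^ 48 : ℝ) = 2 ^ 24 := by rw [Real.sqrt_eq_iff_mul_self_eq] <;> norm_num
  rw [hsqrt, Real.log_pow] at hlog
  have hmul : Real.log 2 * N ≤ 0.6931471808 * N := by gcongr; exact Real.log_two_lt_d9.le
  calc _ ≤ 2 * √N * Real.log N := Chebyshev.psi_sub_theta_le (by linarith)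
    _ = 2 * (√N * Real.log N) := mul_assoc _ _ _
    _ ≤ 2 * (48 * Real.log 2 / 2 ^ 24 * N) :=
      mul_le_mul_of_nonneg_left (by exact_mod_cast hlog) (by norm_num)
    _ ≤ 0.00001 * N := by linarith

theorem exists_prime_mod_four_of_two_pow_le {r : ℕ} (hr : r = 1 ∨ r = 3) {x : ℝ}
    (hx : 2 ^ 48 ≤ x) :
    ∃ p : ℕ, p.Prime ∧ x < p ∧ p ≤ 1.048 * x ∧ p % 4 = r := by
  have hx0 : 0 ≤ x := le_trans (by norm_num) hx
  have hM : 2 ^ 48 ≤ ⌊x⌋₊ := Nat.le_floor (by exact_mod_cast hx)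
  have hN : 2 ^ 48 ≤ ⌊1.048 * x⌋₊ := Nat.le_floor (by push_cast; linarith)
  have hunit : IsUnit (r : ZMod 4) := by rcases hr with rfl | rfl <;> decide
  have hclassM := (abs_le.1 (abs_classSum_vonMangoldt_mod4_sub_le_of_ge hunit hM)).2
  have hclassN := (abs_le.1 (abs_classSum_vonMangoldt_mod4_sub_le_of_ge hunit hN)).1
  have hdensity := mod4Density_bounds.1
  have hpsi := psi_sub_theta_le_of_ge (N := ⌊1.048 * x⌋₊) (by exact_mod_cast hN)
  have hfloor : 0.048 * x - 1 ≤ ⌊1.048 * x⌋₊ - (⌊x⌋₊ : ℝ) := by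
    linarith [Nat.lt_floor_add_one (1.048 * x), Nat.floor_le hx0]
  have hmain : 0.497 * (0.048 * x - 1) ≤
      mod4Density * (⌊1.048 * x⌋₊ - ⌊x⌋₊) :=
    mul_le_mul hdensity hfloor (by linarith) (by linarith)
  obtain ⟨p, hp, hMp, hpN, hpr⟩ := exists_prime_of_psi_sub_theta_lt (q := 4) (a := r)
    (M := ⌊x⌋₊) (N := ⌊1.048 * x⌋₊) (by
      linarith [Nat.floor_le hx0, Nat.floor_le (show 0 ≤ 1.048 * x by positivity)])
  refine ⟨p, hp, (Nat.floor_lt hx0).1 hMp, (Nat.le_floor_iff (by positivity)).1 hpN, ?_⟩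
  rw [ZMod.natCast_eq_natCast_iff'] at hpr
  lia

/-! ### Chains of explicit primes -/

/-- `∏ m ∈ [a, a + 2 ^ k), m`, multiplied out as a balanced tree so that the kernel evaluates it
with few recursive calls on the stack. -/
def consecProd (a : ℕ) : ℕ → ℕ
  | 0 => a
  | k + 1 => consecProd a k * consecProd (a + 2 ^ k) k

theorem dvd_consecProd {m : ℕ} : ∀ {k a : ℕ}, a ≤ m → m < a + 2 ^ k → m ∣ consecProd a k
  | 0, a, ham, hm => by simp [consecProd, show m = a by lia]
  | k + 1, a, ham, hm => by
    rcases lt_or_ge m (a + 2 ^ k) with hlt | hge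
    · exact (dvd_consecProd ham hlt).mul_right _
    · exact (dvd_consecProd hge (by lia)).mul_left _

theorem prime_of_coprime_consecProd {p k : ℕ} (hp : 1 < p) (hk : p < 4 ^ k)
    (h : p.Coprime (consecProd 1 k)) : p.Prime := by
  by_contra hn
  have hsq : p.minFac ^ 2 < (2 ^ k) ^ 2 := by
    rw [pow_right_comm]
    exact (Nat.minFac_sq_le_self (by lia) hn).trans_lt hk
  have hlt : p.minFac < 2 ^ k := lt_of_pow_lt_pow_left' 2 hsq
  have hdvd := dvd_consecProd (a := 1) p.minFac_pos (by lia : p.minFac < 1 + 2 ^ k)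
  exact Nat.not_coprime_of_dvd_of_dvd (Nat.minFac_prime hp.ne').one_lt p.minFac_dvd hdvd h

theorem prime_pow_dvd_sub_one {l q k : ℕ} [Fact l.Prime] [Fact q.Prime] {u : ZMod l}
    (hne : u ^ q ^ k ≠ 1) (heq : u ^ q ^ (k + 1) = 1) : q ^ (k + 1) ∣ l - 1 := by
  have hu : u ≠ 0 := by
    rintro rfl
    simp [(Fact.out : q.Prime).ne_zero] at heq
  exact orderOf_eq_prime_pow hne heq ▸ ZMod.orderOf_dvd_card_sub_one hu

theorem prime_of_pocklington {N q k u : ℕ} (hq : q.Prime) (hN : 1 < N)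
    (hlt : N < (q ^ (k + 1)) ^ 2) (hone : u ^ q ^ (k + 1) ≡ 1 [MOD N])
    (hcop : (u ^ q ^ k + (N - 1)).Coprime N) : N.Prime := by
  by_contra hn
  have hl := Nat.minFac_prime hN.ne'
  have := Fact.mk hl
  have := Fact.mk hq
  have hlN : (N : ZMod N.minFac) = 0 := (ZMod.natCast_eq_zero_iff _ _).2 N.minFac_dvd
  have hne : (u : ZMod N.minFac) ^ q ^ k ≠ 1 := by
    intro h
    refine Nat.not_coprime_of_dvd_of_dvd hl.one_lt ?_ N.minFac_dvd hcop
    rw [← ZMod.natCast_eq_zero_iff]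
    push_cast [hN.le]
    rw [h, hlN]
    ring
  have heq : (u : ZMod N.minFac) ^ q ^ (k + 1) = 1 := by
    exact_mod_cast (ZMod.natCast_eq_natCast_iff _ _ _).2 (hone.of_dvd N.minFac_dvd)
  have hle := Nat.le_of_dvd (Nat.sub_pos_of_lt hl.one_lt) (prime_pow_dvd_sub_one hne heq)
  have hsq := Nat.pow_le_pow_left (hle.trans (Nat.sub_le _ _)) 2
  exact (hlt.trans_le (hsq.trans (Nat.minFac_sq_le_self (by lia) hn))).false

theorem iterate_cube_mod_modEq (p u : ℕ) : ∀ k, (fun t ↦ t ^ 3 % p)^[k] u ≡ u ^ 3 ^ k [MOD p]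
  | 0 => by simp [Nat.ModEq.refl]
  | k + 1 => by
    rw [Function.iterate_succ_apply', pow_succ 3, pow_mul]
    exact (Nat.mod_modEq _ _).trans ((iterate_cube_mod_modEq p u k).pow 3)

/-- The Pocklington test to base `2` for a number `p` such that `3 ^ (k + 1) ∣ p - 1`. -/
def pocklingtonTest (k p : ℕ) : Bool :=
  let t := (fun t ↦ t ^ 3 % p)^[k] (2 ^ ((p - 1) / 3 ^ (k + 1)) % p)
  t ^ 3 % p == 1 && Nat.gcd (t + (p - 1)) p == 1

theorem prime_of_pocklingtonTest {k p : ℕ} (hp : 1 < p) (hk : p < 9 ^ (k + 1))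
    (h : pocklingtonTest k p) : p.Prime := by
  simp only [pocklingtonTest, Bool.and_eq_true, beq_iff_eq] at h
  obtain ⟨hone, hcop⟩ := h
  have hmod := iterate_cube_mod_modEq p (2 ^ ((p - 1) / 3 ^ (k + 1)) % p) k
  refine prime_of_pocklington (q := 3) (k := k) Nat.prime_three hp (by rwa [pow_right_comm]) ?_
    (((hmod.add_right _).gcd_eq.symm).trans hcop)
  rw [pow_succ 3, pow_mul]
  exact (hmod.pow 3).symm.trans (hone.trans (Nat.mod_eq_of_lt hp).symm)

/-- A sufficient test for primality: trial division for small `p`, and the Pocklington test with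
the least power of `3` exceeding `√p` for large `p`. -/
def primeTest (p : ℕ) : Bool :=
  if p < 2 ^ 27 then Nat.gcd (consecProd 1 (Nat.log 4 p + 1) % p) p == 1
  else pocklingtonTest (Nat.log 9 p) p

theorem prime_of_primeTest {p : ℕ} (hp : 1 < p) (h : primeTest p) : p.Prime := by
  unfold primeTest at h
  split_ifs at h with hsmall
  · exact prime_of_coprime_consecProd hp (Nat.lt_pow_succ_log_self (by norm_num) p)
      ((Nat.gcd_rec _ _).trans (beq_iff_eq.1 h))
  · exact prime_of_pocklingtonTest hp (Nat.lt_pow_succ_log_self (by norm_num) p) h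

/-- The step of the progression `1 + stride a * ℕ` in which a prime slightly above `a` is sought;
for large `a` it is a power of `3` for which `primeTest` can succeed. -/
def primeSearchStride (a : ℕ) : ℕ :=
  if a < 2 ^ 26 then 1 else 3 ^ (Nat.log 9 (2 * a) + 1)

/-- A prime `p ≡ r mod 4` in `(a, 1.048 a]`, sought downwards from the upper end. The candidates
are listed lazily, which `List.range` would not do. -/
def nextPrime? (r a : ℕ) : Option ℕ :=
  let s := primeSearchStride a
  ((List.range' 0 1000).map fun i ↦ ((1048 * a / 1000 - 1) / s - i) * s + 1).find? fun p ↦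
    decide (a < p) && decide (1000 * p ≤ 1048 * a) && p % 4 == r && primeTest p

theorem nextPrime?_eq_some {r a p : ℕ} (ha : 0 < a) (h : nextPrime? r a = some p) :
    p.Prime ∧ 1000 * p ≤ 1048 * a ∧ p % 4 = r := by
  have hp := List.find?_some h
  simp only [Bool.and_eq_true, decide_eq_true_eq, beq_iff_eq] at hp
  obtain ⟨⟨⟨hap, hpa⟩, hpr⟩, hprime⟩ := hp
  exact ⟨prime_of_primeTest (Nat.lt_of_le_of_lt ha hap) hprime, hpa, hpr⟩

/-- Whether iterating `nextPrime? r` at most `n` times leads from `a` to a number `≥ b`.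
Matching on `p + 1` instead of `p` makes the kernel evaluate each prime before it goes on. -/
def primeChainReaches (r b : ℕ) : ℕ → ℕ → Bool
  | 0, a => decide (b ≤ a)
  | n + 1, a => decide (b ≤ a) || match nextPrime? r a with
    | some (p + 1) => primeChainReaches r b n (p + 1)
    | _ => false

theorem exists_prime_of_primeChainReaches {r b n a : ℕ} (ha : 0 < a)
    (h : primeChainReaches r b n a) {x : ℝ} (hax : a ≤ x) (hxb : x < b) :
    ∃ p : ℕ, p.Prime ∧ x < p ∧ p ≤ 1.048 * x ∧ p % 4 = r := by
  have hlt {m : ℕ} (hmx : m ≤ x) : ¬b ≤ m := not_le.2 (by exact_mod_cast hmx.trans_lt hxb)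
  induction n generalizing a with
  | zero => exact absurd (of_decide_eq_true h) (hlt hax)
  | succ n ih =>
    rw [primeChainReaches, Bool.or_eq_true, decide_eq_true_eq, or_iff_right (hlt hax)] at h
    split at h
    case h_1 p hnext =>
      obtain ⟨hp, hpa, hpr⟩ := nextPrime?_eq_some ha hnext
      rcases lt_or_ge x (p + 1 : ℕ) with hxp | hpx
      · have : (1000 : ℝ) * (p + 1 : ℕ) ≤ 1048 * a := by exact_mod_cast hpa
        exact ⟨p + 1, hp, hxp, by linarith, hpr⟩
      · exact ih p.succ_pos h hpx
    case h_2 => simp at h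

theorem primeChainReaches_one : primeChainReaches 1 (2 ^ 48) 700 887 := by decide +kernel

theorem primeChainReaches_three : primeChainReaches 3 (2 ^ 48) 700 887 := by decide +kernel

/-- For `r ∈ {1, 3}` and every real `x ≥ 887`, the interval `(x, 1.048x]` contains a prime
congruent to `r` modulo `4`. -/
theorem exists_prime_mod_four_in_interval (r : ℕ) (hr : r ∈ ({1, 3} : Set ℕ))
    (x : ℝ) (hx : 887 ≤ x) :
    ∃ p : ℕ, p.Prime ∧ x < (p : ℝ) ∧ (p : ℝ) ≤ 1.048 * x ∧ p % 4 = r := by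
  have hr' : r = 1 ∨ r = 3 := hr
  rcases le_or_gt (2 ^ 48) x with hlarge | hsmall
  · exact exists_prime_mod_four_of_two_pow_le hr' hlarge
  · have hchain : primeChainReaches r (2 ^ 48) 700 887 := by
      rcases hr' with rfl | rfl
      exacts [primeChainReaches_one, primeChainReaches_three]
    exact exists_prime_of_primeChainReaches (by norm_num) hchain (by exact_mod_cast hx)
      (by exact_mod_cast hsmall)
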